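/- Let L_1 and L_2 be two distinct lines in P^2 meeting at a point q. Let p_1, p_2 be distinct points of L_2 \ {q} and p_3, p_4 distinct points of L_1 \ {q}, and let Z = 2p_1 + p_2 + p_3 + p_4 be the fat points scheme with a double point at p_1 and simple points at p_2, p_3, p_4. Then the Waldschmidt constant of I(Z) equals 5/2. -/

import Mathlib

noncomputable section

open MvPolynomial

/-- `alpha J` is the least degree of a nonzero homogeneous form in the ideal `J`. -/
def alpha {kk : Type*} [Field kk] {σ : Type*} (J : Ideal (MvPolynomial σ kk)) : ℕ :=
  sInf {d : ℕ | ∃ f ∈ J, f ≠ 0 ∧ MvPolynomial.IsHomogeneous f d}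

/-- The homogeneous (prime) ideal of the point of `ℙ²` represented by the nonzero vector
`p`, generated by the linear forms vanishing at `p`. -/
def pointIdeal {kk : Type*} [Field kk] (p : Fin 3 → kk) : Ideal (MvPolynomial (Fin 3) kk) :=
  Ideal.span {f | f.IsHomogeneous 1 ∧ MvPolynomial.eval p f = 0}

/-- Two nonzero vectors represent the same point of `ℙ²`. -/
def projEq {kk : Type*} [Field kk] (p q : Fin 3 → kk) : Prop :=
  ∃ c : kk, c ≠ 0 ∧ q = c • p

/-!
The multiplicity of a form at `p` is the order in `T` of `f(S p + T X)`, hence additive on products.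
If the multiplicities of `f` at two points of a line add up to more than `deg f`, the restriction of
`f` to the line vanishes, so the line splits off. If the multiplicities of `f` at the four points
had sum greater than `2 deg f`, this would apply to `L₂` or to `L₁`; removing that line lowers the
sum by at most `2` and the degree by `1`, so the excess persists and descent rules it out. A form
of degree `d` in `I(Z)^{(k)}` therefore satisfies `5k ≤ 2d`. Equality holds for `k = 2` and the
quintic `2 L₂ + L₁ + p₁p₃ + p₁p₄`.
-/

section LinearForms

variable {K σ : Type*} [Field K] [Fintype σ]

theorem exists_eq_sum_smul_X_of_isHomogeneous_one {ℓ : MvPolynomial σ K}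
    (hℓ : ℓ.IsHomogeneous 1) : ∃ a : σ → K, ℓ = ∑ i, a i • X i := by
  rw [← mem_homogeneousSubmodule, homogeneousSubmodule_one_eq_span_X,
    Submodule.mem_span_range_iff_exists_fun] at hℓ
  exact hℓ.imp fun _ => Eq.symm

theorem isHomogeneous_sum_smul_X (a : σ → K) :
    (∑ i, a i • X i : MvPolynomial σ K).IsHomogeneous 1 := by
  simp only [smul_eq_C_mul]
  exact IsHomogeneous.sum _ _ _ fun i _ => isHomogeneous_C_mul_X _ _

theorem aeval_sum_smul_X {A : Type*} [CommRing A] [Algebra K A] (a : σ → K) (v : σ → A) :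
    aeval v (∑ i, a i • X i : MvPolynomial σ K) = ∑ i, a i • v i := by
  simp only [map_sum, map_smul, aeval_X]

theorem eval_sum_smul_X (a v : σ → K) :
    eval v (∑ i, a i • X i : MvPolynomial σ K) = a ⬝ᵥ v := by
  simp only [map_sum, smul_eval, eval_X, dotProduct]

theorem exists_eval_ne_zero_of_isHomogeneous_one {τ : Type*} [Finite τ] {ℓ : MvPolynomial τ K}
    (hℓ : ℓ.IsHomogeneous 1) (hℓ0 : ℓ ≠ 0) : ∃ v, eval v ℓ ≠ 0 := by
  cases nonempty_fintype τ
  obtain ⟨a, rfl⟩ := exists_eq_sum_smul_X_of_isHomogeneous_one hℓ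
  contrapose! hℓ0
  have ha : a = 0 := dotProduct_eq_zero a fun v => by rw [← eval_sum_smul_X, hℓ0]
  simp only [ha, Pi.zero_apply, zero_smul, Finset.sum_const_zero]

theorem exists_dual_linear_forms {b : σ → σ → K} (hb : LinearIndependent K b) :
    ∃ x : σ → MvPolynomial σ K, ∀ ℓ : MvPolynomial σ K, ℓ.IsHomogeneous 1 →
      ℓ = ∑ j, eval (b j) ℓ • x j := by
  classical
  let B : Matrix σ σ K := Matrix.of b
  have hB : IsUnit B.det :=
    (Matrix.isUnit_iff_isUnit_det B).1 (Matrix.linearIndependent_rows_iff_isUnit.1 hb)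
  refine ⟨fun j => ∑ i, B⁻¹ i j • X i, fun ℓ hℓ => ?_⟩
  obtain ⟨a, rfl⟩ := exists_eq_sum_smul_X_of_isHomogeneous_one hℓ
  have ha : a = B⁻¹.mulVec (B.mulVec a) := by
    rw [Matrix.mulVec_mulVec, Matrix.nonsing_inv_mul B hB, Matrix.one_mulVec]
  have haB (j : σ) : eval (b j) (∑ i, a i • X i) = B.mulVec a j := by
    rw [eval_sum_smul_X, dotProduct_comm]; rfl
  simp only [haB, Finset.smul_sum]
  rw [Finset.sum_comm]
  refine Finset.sum_congr rfl fun i _ => ?_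
  conv_lhs => rw [ha, Matrix.mulVec, dotProduct, Finset.sum_smul]
  simp only [smul_smul, mul_comm]

theorem exists_linear_form_through_two_points (u v : Fin 3 → K) :
    ∃ ℓ : MvPolynomial (Fin 3) K,
      ℓ ≠ 0 ∧ ℓ.IsHomogeneous 1 ∧ eval u ℓ = 0 ∧ eval v ℓ = 0 := by
  have hker : LinearMap.ker (Matrix.of ![u, v]).mulVecLin ≠ ⊥ :=
    LinearMap.ker_ne_bot_of_finrank_lt (by simp)
  obtain ⟨a, ha, ha0⟩ := Submodule.exists_mem_ne_zero_of_ne_bot hker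
  have hav : ∀ i, a ⬝ᵥ ![u, v] i = 0 := fun i => by
    rw [dotProduct_comm]; exact congrFun (LinearMap.mem_ker.1 ha) i
  refine ⟨∑ i, a i • X i, fun h => ha0 ?_, isHomogeneous_sum_smul_X a, ?_, ?_⟩
  · exact dotProduct_eq_zero a fun w => by rw [← eval_sum_smul_X, h, map_zero]
  · rw [eval_sum_smul_X]; exact hav 0
  · rw [eval_sum_smul_X]; exact hav 1

end LinearForms

section Multiplicity

variable {K σ : Type*} [Field K]

/-- The expansion `f ↦ f(S p + T X)` at the point with coordinate vector `p`, as a polynomial in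
`T` with coefficients in `K[S, X]`. The variable `S` is `X none` and the direction `X` has
coordinates `X (some i)`; scaling `p` by `S` makes the expansion meaningful for projective
points. -/
def expandAt (p : σ → K) : MvPolynomial σ K →ₐ[K] Polynomial (MvPolynomial (Option σ) K) :=
  aeval fun i => Polynomial.C (p i • X none) + Polynomial.X * Polynomial.C (X (some i))

/-- The multiplicity of `f` at the projective point with coordinate vector `p`: the order in `T` of
`f(S p + T X)`. It is `0` by convention for `f = 0`. -/
def multAt (p : σ → K) (f : MvPolynomial σ K) : ℕ :=
  (expandAt p f).natTrailingDegree

/-- The specialization `S ↦ s`, `T ↦ t`, `X ↦ v` on the ring in which `expandAt` takes its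
values; applied to an expansion at `p` it evaluates at `s p + t v`. -/
def specializeExpansion {A : Type*} [CommRing A] [Algebra K A] (s t : A) (v : σ → A) :
    Polynomial (MvPolynomial (Option σ) K) →ₐ[K] A :=
  Polynomial.aevalTower (aeval fun o => o.elim s v) t

theorem specializeExpansion_expandAt {A : Type*} [CommRing A] [Algebra K A] (s t : A) (v : σ → A)
    (p : σ → K) (f : MvPolynomial σ K) :
    specializeExpansion s t v (expandAt p f) = aeval (fun i => p i • s + t * v i) f := by
  have hcomp : (specializeExpansion s t v).comp (expandAt p) = aeval fun i => p i • s + t * v i :=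
    algHom_ext fun i => by
      simpa [specializeExpansion, expandAt] using mul_comm (v i) t
  exact DFunLike.congr_fun hcomp f

theorem expandAt_injective (p : σ → K) : Function.Injective (expandAt p) :=
  Function.LeftInverse.injective (g := specializeExpansion 0 1 X) fun f => by
    simp [specializeExpansion_expandAt]

theorem expandAt_ne_zero (p : σ → K) {f : MvPolynomial σ K} (hf : f ≠ 0) : expandAt p f ≠ 0 :=
  (map_ne_zero_iff _ (expandAt_injective p)).2 hf

theorem multAt_mul (p : σ → K) {f g : MvPolynomial σ K} (hf : f ≠ 0) (hg : g ≠ 0) :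
    multAt p (f * g) = multAt p f + multAt p g := by
  rw [multAt, map_mul]
  exact Polynomial.natTrailingDegree_mul (expandAt_ne_zero p hf) (expandAt_ne_zero p hg)

theorem multAt_le_totalDegree (p : σ → K) (f : MvPolynomial σ K) :
    multAt p f ≤ f.totalDegree := by
  refine (Polynomial.natTrailingDegree_le_natDegree _).trans ?_
  rw [expandAt, ← aeval_map_algebraMap (MvPolynomial (Option σ) K), ← mul_one f.totalDegree]
  refine aeval_natDegree_le _ (Finset.sup_mono (support_map_subset _ _)) _ fun i => ?_
  compute_degree

theorem pow_multAt_dvd_aeval {A : Type*} [CommRing A] [Algebra K A] (p : σ → K)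
    (f : MvPolynomial σ K) (s t : A) (v : σ → A) :
    t ^ multAt p f ∣ aeval (fun i => p i • s + t * v i) f := by
  have hX : Polynomial.X ^ multAt p f ∣ expandAt p f :=
    Polynomial.X_pow_dvd_iff.2 fun _ => Polynomial.coeff_eq_zero_of_lt_natTrailingDegree
  have hdvd := map_dvd (specializeExpansion s t v) hX
  rw [specializeExpansion_expandAt] at hdvd
  simpa [specializeExpansion] using hdvd

theorem multAt_eq_zero_of_eval_ne_zero {p : σ → K} {f : MvPolynomial σ K} (hf : eval p f ≠ 0) :
    multAt p f = 0 := by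
  by_contra hmult
  have hdvd := pow_multAt_dvd_aeval p f (1 : K) 0 0
  exact hf (by simpa [zero_pow hmult] using hdvd)

theorem le_multAt_of_mem_pointIdeal_pow {p : Fin 3 → K} {f : MvPolynomial (Fin 3) K} {n : ℕ}
    (hf : f ∈ pointIdeal p ^ n) (hf0 : f ≠ 0) : n ≤ multAt p f := by
  have hmap : (pointIdeal p).map (expandAt p) ≤ Ideal.span {Polynomial.X} := by
    rw [pointIdeal, Ideal.map_span, Ideal.span_le]
    rintro _ ⟨ℓ, ⟨hℓ, hpℓ⟩, rfl⟩
    obtain ⟨a, rfl⟩ := exists_eq_sum_smul_X_of_isHomogeneous_one hℓ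
    rw [eval_sum_smul_X, dotProduct] at hpℓ
    rw [SetLike.mem_coe, Ideal.mem_span_singleton, Polynomial.X_dvd_iff, expandAt,
      aeval_sum_smul_X]
    simp [smul_smul, ← Finset.sum_smul, hpℓ]
  have hdvd : Polynomial.X ^ n ∣ expandAt p f := by
    rw [← Ideal.mem_span_singleton, ← Ideal.span_singleton_pow]
    refine Ideal.pow_right_mono hmap n ?_
    rw [← Ideal.map_pow]
    exact Ideal.mem_map_of_mem _ hf
  exact Polynomial.le_natTrailingDegree (expandAt_ne_zero p hf0) (Polynomial.X_pow_dvd_iff.1 hdvd)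

end Multiplicity

section Lines

variable {K : Type*} [Field K]

theorem totalDegree_aeval_le {σ τ : Type*} {φ : σ → MvPolynomial τ K}
    (hφ : ∀ i, (φ i).totalDegree ≤ 1) (f : MvPolynomial σ K) :
    (aeval φ f).totalDegree ≤ f.totalDegree := by
  rw [aeval_def, eval₂_eq]
  refine totalDegree_finsetSum_le fun m hm => ?_
  calc (algebraMap K (MvPolynomial τ K) (coeff m f) * ∏ i ∈ m.support, φ i ^ m i).totalDegree
      ≤ (∏ i ∈ m.support, φ i ^ m i).totalDegree := by
        simpa [algebraMap_eq] using totalDegree_mul (C (coeff m f)) (∏ i ∈ m.support, φ i ^ m i)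
    _ ≤ ∑ i ∈ m.support, (φ i ^ m i).totalDegree := totalDegree_finsetProd _ _
    _ ≤ ∑ i ∈ m.support, m i := Finset.sum_le_sum fun i _ =>
        (totalDegree_pow _ _).trans (mul_le_of_le_one_right' (hφ i))
    _ ≤ f.totalDegree := le_totalDegree hm

/-- The restriction of `f` to the line through `p` and `q`, in the homogeneous coordinates
`(X 0, X 1)` of the point `X 0 • p + X 1 • q`. -/
def restrictLine {σ : Type*} (p q : σ → K) : MvPolynomial σ K →ₐ[K] MvPolynomial (Fin 2) K :=
  aeval fun i => p i • X 0 + q i • X 1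

theorem totalDegree_restrictLine_le {σ : Type*} (p q : σ → K) (f : MvPolynomial σ K) :
    (restrictLine p q f).totalDegree ≤ f.totalDegree :=
  totalDegree_aeval_le (fun i => by
    rw [smul_eq_C_mul, smul_eq_C_mul]
    exact ((isHomogeneous_C_mul_X _ _).add (isHomogeneous_C_mul_X _ _)).totalDegree_le) f

theorem X_pow_mul_X_pow_dvd_restrictLine {σ : Type*} (p q : σ → K) (f : MvPolynomial σ K) :
    X 1 ^ multAt p f * X 0 ^ multAt q f ∣ restrictLine p q f := by
  have hdvd_p : X 1 ^ multAt p f ∣ restrictLine p q f := by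
    simpa only [restrictLine, mul_comm, smul_eq_C_mul] using
      pow_multAt_dvd_aeval p f (X 0 : MvPolynomial (Fin 2) K) (X 1) fun i => C (q i)
  have hdvd_q : X 0 ^ multAt q f ∣ restrictLine p q f := by
    simpa only [restrictLine, mul_comm, smul_eq_C_mul, add_comm] using
      pow_multAt_dvd_aeval q f (X 1 : MvPolynomial (Fin 2) K) (X 0) fun i => C (p i)
  have hX : IsRelPrime (X 1 : MvPolynomial (Fin 2) K) (X 0) :=
    X_prime.irreducible.isRelPrime_iff_not_dvd.2 (by simp [X_dvd_X])
  exact hX.pow.mul_dvd hdvd_p hdvd_q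

theorem restrictLine_eq_zero_of_totalDegree_lt {σ : Type*} {p q : σ → K} {f : MvPolynomial σ K}
    (hf : f.totalDegree < multAt p f + multAt q f) : restrictLine p q f = 0 := by
  by_contra hne
  have hdeg := totalDegree_le_of_dvd_of_isDomain (X_pow_mul_X_pow_dvd_restrictLine p q f) hne
  rw [totalDegree_mul_of_isDomain (pow_ne_zero _ (X_ne_zero 1)) (pow_ne_zero _ (X_ne_zero 0)),
    totalDegree_X_pow, totalDegree_X_pow] at hdeg
  exact (hdeg.trans (totalDegree_restrictLine_le p q f)).not_gt hf

variable {p q : Fin 3 → K} {ℓ : MvPolynomial (Fin 3) K}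

theorem linearIndependent_cons_of_eval_ne_zero (hpq : LinearIndependent K ![p, q])
    (hℓ : ℓ.IsHomogeneous 1) (hp : eval p ℓ = 0) (hq : eval q ℓ = 0) {r : Fin 3 → K}
    (hr : eval r ℓ ≠ 0) : LinearIndependent K ![r, p, q] := by
  obtain ⟨a, rfl⟩ := exists_eq_sum_smul_X_of_isHomogeneous_one hℓ
  rw [eval_sum_smul_X] at hp hq hr
  refine linearIndependent_finCons.2 ⟨hpq, fun hmem => hr ?_⟩
  rw [Matrix.range_cons_cons_empty, Submodule.mem_span_pair] at hmem
  obtain ⟨s, t, rfl⟩ := hmem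
  simp [hp, hq]

theorem dvd_of_restrictLine_eq_zero (hpq : LinearIndependent K ![p, q]) (hℓ0 : ℓ ≠ 0)
    (hℓ : ℓ.IsHomogeneous 1) (hp : eval p ℓ = 0) (hq : eval q ℓ = 0)
    {f : MvPolynomial (Fin 3) K} (hf : restrictLine p q f = 0) : ℓ ∣ f := by
  obtain ⟨r, hr⟩ := exists_eval_ne_zero_of_isHomogeneous_one hℓ hℓ0
  obtain ⟨x, hx⟩ :=
    exists_dual_linear_forms (linearIndependent_cons_of_eval_ne_zero hpq hℓ hp hq hr)
  have hℓx : ℓ = eval r ℓ • x 0 := by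
    simpa [Fin.sum_univ_three, hp, hq] using hx ℓ hℓ
  have hx0 : ℓ ∣ x 0 := by
    rw [(eq_inv_smul_iff₀ hr).2 hℓx.symm]
    exact dvd_smul_of_dvd _ dvd_rfl
  let π := Ideal.Quotient.mkₐ K (Ideal.span {ℓ})
  -- Since `x 0 = 0` modulo `ℓ`, restricting to the line loses nothing modulo `ℓ`.
  have hπ : π = (π.comp (aeval ![x 1, x 2])).comp (restrictLine p q) := by
    refine algHom_ext fun i => ?_
    have hXi := hx (X i) (isHomogeneous_X K i)
    simp only [Fin.sum_univ_three, eval_X, Matrix.cons_val] at hXi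
    have hπx0 : π (x 0) = 0 := Ideal.Quotient.eq_zero_iff_mem.2 (Ideal.mem_span_singleton.2 hx0)
    conv_lhs => rw [hXi]
    simp [restrictLine, hπx0]
  rw [← Ideal.mem_span_singleton, ← Ideal.Quotient.eq_zero_iff_mem]
  change π f = 0
  rw [hπ, AlgHom.comp_apply, hf, map_zero]

theorem dvd_of_totalDegree_lt_multAt_add (hpq : LinearIndependent K ![p, q]) (hℓ0 : ℓ ≠ 0)
    (hℓ : ℓ.IsHomogeneous 1) (hp : eval p ℓ = 0) (hq : eval q ℓ = 0)
    {f : MvPolynomial (Fin 3) K} (hf : f.totalDegree < multAt p f + multAt q f) : ℓ ∣ f :=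
  dvd_of_restrictLine_eq_zero hpq hℓ0 hℓ hp hq (restrictLine_eq_zero_of_totalDegree_lt hf)

end Lines

section Points

variable {K : Type*} [Field K]

theorem mem_pointIdeal {p : Fin 3 → K} {ℓ : MvPolynomial (Fin 3) K} (hℓ : ℓ.IsHomogeneous 1)
    (hp : eval p ℓ = 0) : ℓ ∈ pointIdeal p :=
  Ideal.subset_span ⟨hℓ, hp⟩

theorem linearIndependent_pair_of_not_projEq {p q : Fin 3 → K} (hp : p ≠ 0) (hq : q ≠ 0)
    (hpq : ¬ projEq p q) : LinearIndependent K ![p, q] := by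
  refine (LinearIndependent.pair_iff' hp).2 fun c hc => hpq ⟨c, ?_, hc.symm⟩
  rintro rfl
  exact hq (by rw [← hc, zero_smul])

theorem projEq_of_eval_eq_zero {ℓ₁ ℓ₂ : MvPolynomial (Fin 3) K} (hℓ₁0 : ℓ₁ ≠ 0) (hℓ₂0 : ℓ₂ ≠ 0)
    (hℓ₁ : ℓ₁.IsHomogeneous 1) (hℓ₂ : ℓ₂.IsHomogeneous 1)
    (hne : ¬ ∃ c : K, c ≠ 0 ∧ ℓ₂ = c • ℓ₁) {p q : Fin 3 → K} (hp0 : p ≠ 0) (hq0 : q ≠ 0)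
    (hp₁ : eval p ℓ₁ = 0) (hp₂ : eval p ℓ₂ = 0) (hq₁ : eval q ℓ₁ = 0) (hq₂ : eval q ℓ₂ = 0) :
    projEq p q := by
  by_contra hpq
  have hmult {v : Fin 3 → K} (hv : eval v ℓ₂ = 0) : 1 ≤ multAt v ℓ₂ :=
    le_multAt_of_mem_pointIdeal_pow (by simpa using mem_pointIdeal hℓ₂ hv) hℓ₂0
  have hdeg : ℓ₂.totalDegree < multAt p ℓ₂ + multAt q ℓ₂ := by
    have := hmult hp₂
    have := hmult hq₂
    have := hℓ₂.totalDegree hℓ₂0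
    omega
  obtain ⟨g, rfl⟩ := dvd_of_totalDegree_lt_multAt_add
    (linearIndependent_pair_of_not_projEq hp0 hq0 hpq) hℓ₁0 hℓ₁ hp₁ hq₁ hdeg
  have hg0 : g ≠ 0 := right_ne_zero_of_mul hℓ₂0
  have hg : g.totalDegree = 0 := by
    have hmul := totalDegree_mul_of_isDomain hℓ₁0 hg0
    rw [hℓ₂.totalDegree hℓ₂0, hℓ₁.totalDegree hℓ₁0] at hmul
    omega
  rw [totalDegree_eq_zero_iff_eq_C] at hg
  refine hne ⟨coeff 0 g, fun h => hg0 (by rw [hg, h, C_0]), ?_⟩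
  rw [smul_eq_C_mul, ← hg, mul_comm]

end Points

section ReducibleConic

variable {K : Type*} [Field K]

/-- The configuration of the theorem: `p` and `q` are distinct points of the line `ℓ = 0` off the
line `m = 0`, and `r` and `s` are distinct points of the line `m = 0` off the line `ℓ = 0`.
Distinctness of projective points is linear independence of their coordinate vectors. -/
structure IsOnLinePair (ℓ m : MvPolynomial (Fin 3) K) (p q r s : Fin 3 → K) : Prop where
  isHomogeneous_left : ℓ.IsHomogeneous 1
  isHomogeneous_right : m.IsHomogeneous 1
  linearIndependent_left : LinearIndependent K ![p, q]
  linearIndependent_right : LinearIndependent K ![r, s]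
  eval_p_left : eval p ℓ = 0
  eval_q_left : eval q ℓ = 0
  eval_r_right : eval r m = 0
  eval_s_right : eval s m = 0
  eval_p_right_ne : eval p m ≠ 0
  eval_q_right_ne : eval q m ≠ 0
  eval_r_left_ne : eval r ℓ ≠ 0
  eval_s_left_ne : eval s ℓ ≠ 0

namespace IsOnLinePair

variable {ℓ m : MvPolynomial (Fin 3) K} {p q r s : Fin 3 → K}

theorem symm (h : IsOnLinePair ℓ m p q r s) : IsOnLinePair m ℓ r s p q :=
  ⟨h.isHomogeneous_right, h.isHomogeneous_left, h.linearIndependent_right,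
    h.linearIndependent_left, h.eval_r_right, h.eval_s_right, h.eval_p_left, h.eval_q_left,
    h.eval_r_left_ne, h.eval_s_left_ne, h.eval_p_right_ne, h.eval_q_right_ne⟩

theorem left_ne_zero (h : IsOnLinePair ℓ m p q r s) : ℓ ≠ 0 := by
  rintro rfl
  exact h.eval_r_left_ne (map_zero _)

theorem sum_multAt_left_mul_le (h : IsOnLinePair ℓ m p q r s) {g : MvPolynomial (Fin 3) K}
    (hg : g ≠ 0) :
    multAt p (ℓ * g) + multAt q (ℓ * g) + multAt r (ℓ * g) + multAt s (ℓ * g) ≤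
      multAt p g + multAt q g + multAt r g + multAt s g + 2 := by
  have hmult (v : Fin 3 → K) : multAt v ℓ ≤ 1 :=
    (multAt_le_totalDegree v ℓ).trans h.isHomogeneous_left.totalDegree_le
  have hp := hmult p
  have hq := hmult q
  simp only [multAt_mul _ h.left_ne_zero hg, multAt_eq_zero_of_eval_ne_zero h.eval_r_left_ne,
    multAt_eq_zero_of_eval_ne_zero h.eval_s_left_ne]
  omega

theorem exists_residual_of_totalDegree_lt (h : IsOnLinePair ℓ m p q r s)
    {f : MvPolynomial (Fin 3) K} (hf0 : f ≠ 0)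
    (hf : f.totalDegree < multAt p f + multAt q f) :
    ∃ g : MvPolynomial (Fin 3) K, g ≠ 0 ∧ f.totalDegree = g.totalDegree + 1 ∧
      multAt p f + multAt q f + multAt r f + multAt s f ≤
        multAt p g + multAt q g + multAt r g + multAt s g + 2 := by
  obtain ⟨g, rfl⟩ := dvd_of_totalDegree_lt_multAt_add h.linearIndependent_left h.left_ne_zero
    h.isHomogeneous_left h.eval_p_left h.eval_q_left hf
  have hg := right_ne_zero_of_mul hf0
  refine ⟨g, hg, ?_, h.sum_multAt_left_mul_le hg⟩
  rw [totalDegree_mul_of_isDomain h.left_ne_zero hg,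
    h.isHomogeneous_left.totalDegree h.left_ne_zero, add_comm]

theorem sum_multAt_le_two_mul_totalDegree (h : IsOnLinePair ℓ m p q r s)
    {f : MvPolynomial (Fin 3) K} (hf : f ≠ 0) :
    multAt p f + multAt q f + multAt r f + multAt s f ≤ 2 * f.totalDegree := by
  induction hd : f.totalDegree using Nat.strong_induction_on generalizing f with
  | _ d ih
  by_cases hpq : f.totalDegree < multAt p f + multAt q f
  · obtain ⟨g, hg, hdeg, hsum⟩ := h.exists_residual_of_totalDegree_lt hf hpq
    have := ih g.totalDegree (by omega) hg rfl
    omega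
  by_cases hrs : f.totalDegree < multAt r f + multAt s f
  · obtain ⟨g, hg, hdeg, hsum⟩ := h.symm.exists_residual_of_totalDegree_lt hf hrs
    have := ih g.totalDegree (by omega) hg rfl
    omega
  omega

theorem sum_exponents_le_two_mul_degree (h : IsOnLinePair ℓ m p q r s)
    {f : MvPolynomial (Fin 3) K} {d a b c e : ℕ} (hf0 : f ≠ 0) (hf : f.IsHomogeneous d)
    (hfp : f ∈ pointIdeal p ^ a) (hfq : f ∈ pointIdeal q ^ b)
    (hfr : f ∈ pointIdeal r ^ c) (hfs : f ∈ pointIdeal s ^ e) :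
    a + b + c + e ≤ 2 * d :=
  calc a + b + c + e
      ≤ multAt p f + multAt q f + multAt r f + multAt s f := by
        gcongr <;> exact le_multAt_of_mem_pointIdeal_pow ‹_› hf0
    _ ≤ 2 * f.totalDegree := h.sum_multAt_le_two_mul_totalDegree hf0
    _ = 2 * d := by rw [hf.totalDegree hf0]

end IsOnLinePair

variable {ℓ₁ ℓ₂ : MvPolynomial (Fin 3) K} {p₁ p₂ p₃ p₄ : Fin 3 → K}

theorem isOnLinePair_of_not_projEq (hℓ₁0 : ℓ₁ ≠ 0) (hℓ₂0 : ℓ₂ ≠ 0)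
    (hℓ₁ : ℓ₁.IsHomogeneous 1) (hℓ₂ : ℓ₂.IsHomogeneous 1)
    (hne : ¬ ∃ c : K, c ≠ 0 ∧ ℓ₂ = c • ℓ₁) {q : Fin 3 → K} (hq0 : q ≠ 0)
    (hq₁ : eval q ℓ₁ = 0) (hq₂ : eval q ℓ₂ = 0)
    (hp₁0 : p₁ ≠ 0) (hp₂0 : p₂ ≠ 0) (hp₃0 : p₃ ≠ 0) (hp₄0 : p₄ ≠ 0)
    (hp₁ : eval p₁ ℓ₂ = 0) (hp₂ : eval p₂ ℓ₂ = 0) (hp₃ : eval p₃ ℓ₁ = 0) (hp₄ : eval p₄ ℓ₁ = 0)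
    (hp₁q : ¬ projEq p₁ q) (hp₂q : ¬ projEq p₂ q) (hp₃q : ¬ projEq p₃ q) (hp₄q : ¬ projEq p₄ q)
    (hp₁₂ : ¬ projEq p₁ p₂) (hp₃₄ : ¬ projEq p₃ p₄) :
    IsOnLinePair ℓ₂ ℓ₁ p₁ p₂ p₃ p₄ := by
  have eq_q {p : Fin 3 → K} (hp0 : p ≠ 0) (h₁ : eval p ℓ₁ = 0) (h₂ : eval p ℓ₂ = 0) :
      projEq p q := projEq_of_eval_eq_zero hℓ₁0 hℓ₂0 hℓ₁ hℓ₂ hne hp0 hq0 h₁ h₂ hq₁ hq₂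
  exact ⟨hℓ₂, hℓ₁, linearIndependent_pair_of_not_projEq hp₁0 hp₂0 hp₁₂,
    linearIndependent_pair_of_not_projEq hp₃0 hp₄0 hp₃₄, hp₁, hp₂, hp₃, hp₄,
    fun h => hp₁q (eq_q hp₁0 h hp₁), fun h => hp₂q (eq_q hp₂0 h hp₂),
    fun h => hp₃q (eq_q hp₃0 hp₃ h), fun h => hp₄q (eq_q hp₄0 hp₄ h)⟩

theorem exists_quintic_mem_pointIdeal_pow (hℓ₁0 : ℓ₁ ≠ 0) (hℓ₂0 : ℓ₂ ≠ 0)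
    (hℓ₁ : ℓ₁.IsHomogeneous 1) (hℓ₂ : ℓ₂.IsHomogeneous 1)
    (hp₁ : eval p₁ ℓ₂ = 0) (hp₂ : eval p₂ ℓ₂ = 0) (hp₃ : eval p₃ ℓ₁ = 0)
    (hp₄ : eval p₄ ℓ₁ = 0) :
    ∃ F : MvPolynomial (Fin 3) K, F ≠ 0 ∧ F.IsHomogeneous 5 ∧ F ∈ pointIdeal p₁ ^ 4 ∧
      F ∈ pointIdeal p₂ ^ 2 ∧ F ∈ pointIdeal p₃ ^ 2 ∧ F ∈ pointIdeal p₄ ^ 2 := by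
  obtain ⟨M, hM0, hM, hM₁, hM₃⟩ := exists_linear_form_through_two_points p₁ p₃
  obtain ⟨N, hN0, hN, hN₁, hN₄⟩ := exists_linear_form_through_two_points p₁ p₄
  have hℓ₂p₁ := mem_pointIdeal hℓ₂ hp₁
  have hℓ₂p₂ := mem_pointIdeal hℓ₂ hp₂
  refine ⟨ℓ₂ * ℓ₂ * M * N * ℓ₁, by simp [hM0, hN0, hℓ₁0, hℓ₂0],
    (((hℓ₂.mul hℓ₂).mul hM).mul hN).mul hℓ₁, ?_, ?_, ?_, ?_⟩
  · rw [show pointIdeal p₁ ^ 4 = pointIdeal p₁ * pointIdeal p₁ * pointIdeal p₁ * pointIdeal p₁ by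
      ring]
    exact Ideal.mul_mem_right _ _ (Ideal.mul_mem_mul (Ideal.mul_mem_mul
      (Ideal.mul_mem_mul hℓ₂p₁ hℓ₂p₁) (mem_pointIdeal hM hM₁)) (mem_pointIdeal hN hN₁))
  · rw [sq, show ℓ₂ * ℓ₂ * M * N * ℓ₁ = M * N * ℓ₁ * (ℓ₂ * ℓ₂) by ring]
    exact Ideal.mul_mem_left _ _ (Ideal.mul_mem_mul hℓ₂p₂ hℓ₂p₂)
  · rw [sq, show ℓ₂ * ℓ₂ * M * N * ℓ₁ = ℓ₂ * ℓ₂ * N * (M * ℓ₁) by ring]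
    exact Ideal.mul_mem_left _ _
      (Ideal.mul_mem_mul (mem_pointIdeal hM hM₃) (mem_pointIdeal hℓ₁ hp₃))
  · rw [sq, show ℓ₂ * ℓ₂ * M * N * ℓ₁ = ℓ₂ * ℓ₂ * M * (N * ℓ₁) by ring]
    exact Ideal.mul_mem_left _ _
      (Ideal.mul_mem_mul (mem_pointIdeal hN hN₄) (mem_pointIdeal hℓ₁ hp₄))

end ReducibleConic

section Waldschmidt

variable {K σ : Type*} [Field K]

theorem alpha_le {J : Ideal (MvPolynomial σ K)} {f : MvPolynomial σ K} {d : ℕ} (hfJ : f ∈ J)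
    (hf0 : f ≠ 0) (hf : f.IsHomogeneous d) : alpha J ≤ d :=
  Nat.sInf_le ⟨f, hfJ, hf0, hf⟩

theorem exists_isHomogeneous_alpha {J : Ideal (MvPolynomial σ K)} {f : MvPolynomial σ K} {d : ℕ}
    (hfJ : f ∈ J) (hf0 : f ≠ 0) (hf : f.IsHomogeneous d) :
    ∃ g ∈ J, g ≠ 0 ∧ g.IsHomogeneous (alpha J) :=
  Nat.sInf_mem (s := {d | ∃ g ∈ J, g ≠ 0 ∧ g.IsHomogeneous d}) ⟨d, f, hfJ, hf0, hf⟩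

theorem iInf_alpha_div_eq {J : ℕ+ → Ideal (MvPolynomial σ K)} {F : MvPolynomial σ K} {d : ℕ}
    {n : ℕ+} (hF0 : F ≠ 0) (hF : F.IsHomogeneous d) (hFn : F ∈ J n)
    (hFpow : ∀ k : ℕ+, F ^ (k : ℕ) ∈ J k)
    (hJ : ∀ (k : ℕ+) (e : ℕ), ∀ f ∈ J k, f ≠ 0 → f.IsHomogeneous e → d * k ≤ e * n) :
    ⨅ k : ℕ+, (alpha (J k) : ℝ) / (k : ℕ) = d / (n : ℕ) := by
  have hpos (k : ℕ+) : (0 : ℝ) < (k : ℕ) := by exact_mod_cast k.pos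
  have hlower (k : ℕ+) : (d : ℝ) / (n : ℕ) ≤ alpha (J k) / (k : ℕ) := by
    obtain ⟨g, hgJ, hg0, hg⟩ :=
      exists_isHomogeneous_alpha (hFpow k) (pow_ne_zero _ hF0) (hF.pow k)
    rw [div_le_div_iff₀ (hpos n) (hpos k)]
    exact_mod_cast hJ k _ g hgJ hg0 hg
  refine le_antisymm ((ciInf_le ⟨_, Set.forall_mem_range.2 hlower⟩ n).trans ?_) (le_ciInf hlower)
  gcongr
  exact alpha_le hFn hF0 hF

theorem pow_mem_pow_of_le_mul {R : Type*} [CommSemiring R] {I : Ideal R} {a : R} {i j k : ℕ}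
    (ha : a ∈ I ^ i) (hj : j ≤ i * k) : a ^ k ∈ I ^ j :=
  Ideal.pow_le_pow_right hj (pow_mul I i k ▸ Ideal.pow_mem_pow ha k)

end Waldschmidt

theorem waldschmidt_double_point_on_conic_general
    {kk : Type*} [Field kk]
    (ℓ₁ ℓ₂ : MvPolynomial (Fin 3) kk)
    (hl1 : ℓ₁ ≠ 0) (hl2 : ℓ₂ ≠ 0)
    (hd1 : ℓ₁.IsHomogeneous 1) (hd2 : ℓ₂.IsHomogeneous 1)
    (hne : ¬ ∃ c : kk, c ≠ 0 ∧ ℓ₂ = c • ℓ₁)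
    (q : Fin 3 → kk) (hq0 : q ≠ 0)
    (hq1 : MvPolynomial.eval q ℓ₁ = 0) (hq2 : MvPolynomial.eval q ℓ₂ = 0)
    (p₁ p₂ p₃ p₄ : Fin 3 → kk)
    (hp10 : p₁ ≠ 0) (hp20 : p₂ ≠ 0) (hp30 : p₃ ≠ 0) (hp40 : p₄ ≠ 0)
    (hp1L : MvPolynomial.eval p₁ ℓ₂ = 0) (hp2L : MvPolynomial.eval p₂ ℓ₂ = 0)
    (hp3L : MvPolynomial.eval p₃ ℓ₁ = 0) (hp4L : MvPolynomial.eval p₄ ℓ₁ = 0)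
    (hp1q : ¬ projEq p₁ q) (hp2q : ¬ projEq p₂ q)
    (hp3q : ¬ projEq p₃ q) (hp4q : ¬ projEq p₄ q)
    (hp12 : ¬ projEq p₁ p₂) (hp34 : ¬ projEq p₃ p₄) :
    (⨅ k : ℕ+, (alpha (pointIdeal p₁ ^ (2 * (k : ℕ)) ⊓ pointIdeal p₂ ^ (k : ℕ) ⊓
        pointIdeal p₃ ^ (k : ℕ) ⊓ pointIdeal p₄ ^ (k : ℕ)) : ℝ) / ((k : ℕ) : ℝ))
      = 5 / 2 := by
  have hpair := isOnLinePair_of_not_projEq hl1 hl2 hd1 hd2 hne hq0 hq1 hq2 hp10 hp20 hp30 hp40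
    hp1L hp2L hp3L hp4L hp1q hp2q hp3q hp4q hp12 hp34
  obtain ⟨F, hF0, hF, hF₁, hF₂, hF₃, hF₄⟩ :=
    exists_quintic_mem_pointIdeal_pow hl1 hl2 hd1 hd2 hp1L hp2L hp3L hp4L
  let J (k : ℕ+) := pointIdeal p₁ ^ (2 * (k : ℕ)) ⊓ pointIdeal p₂ ^ (k : ℕ) ⊓
    pointIdeal p₃ ^ (k : ℕ) ⊓ pointIdeal p₄ ^ (k : ℕ)
  have hFpow (k : ℕ+) : F ^ (k : ℕ) ∈ J k :=
    ⟨⟨⟨pow_mem_pow_of_le_mul hF₁ (by omega), pow_mem_pow_of_le_mul hF₂ (by omega)⟩,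
      pow_mem_pow_of_le_mul hF₃ (by omega)⟩, pow_mem_pow_of_le_mul hF₄ (by omega)⟩
  have hJ (k : ℕ+) (e : ℕ) : ∀ f ∈ J k, f ≠ 0 → f.IsHomogeneous e → 5 * (k : ℕ) ≤ e * 2 := by
    rintro f ⟨⟨⟨hf₁, hf₂⟩, hf₃⟩, hf₄⟩ hf0 hf
    have hsum := hpair.sum_exponents_le_two_mul_degree hf0 hf hf₁ hf₂ hf₃ hf₄
    omega
  simpa using iInf_alpha_div_eq (J := J) (n := 2) hF0 hF ⟨⟨⟨hF₁, hF₂⟩, hF₃⟩, hF₄⟩ hFpow hJ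

/-- Let `L₁ = {ℓ₁ = 0}` and `L₂ = {ℓ₂ = 0}` be two distinct lines of `ℙ²`
meeting at the point `q`.  Let `p₁, p₂` be distinct points of `L₂ \ {q}` and `p₃, p₄`
distinct points of `L₁ \ {q}`, and let `Z = 2p₁ + p₂ + p₃ + p₄`.  Then the Waldschmidt
constant of `I(Z)` equals `5/2`. -/
theorem waldschmidt_double_point_on_conic
    {kk : Type*} [Field kk] [IsAlgClosed kk]
    (ℓ₁ ℓ₂ : MvPolynomial (Fin 3) kk)
    (hl1 : ℓ₁ ≠ 0) (hl2 : ℓ₂ ≠ 0)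
    (hd1 : ℓ₁.IsHomogeneous 1) (hd2 : ℓ₂.IsHomogeneous 1)
    (hne : ¬ ∃ c : kk, c ≠ 0 ∧ ℓ₂ = c • ℓ₁)
    (q : Fin 3 → kk) (hq0 : q ≠ 0)
    (hq1 : MvPolynomial.eval q ℓ₁ = 0) (hq2 : MvPolynomial.eval q ℓ₂ = 0)
    (p₁ p₂ p₃ p₄ : Fin 3 → kk)
    (hp10 : p₁ ≠ 0) (hp20 : p₂ ≠ 0) (hp30 : p₃ ≠ 0) (hp40 : p₄ ≠ 0)
    (hp1L : MvPolynomial.eval p₁ ℓ₂ = 0) (hp2L : MvPolynomial.eval p₂ ℓ₂ = 0)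
    (hp3L : MvPolynomial.eval p₃ ℓ₁ = 0) (hp4L : MvPolynomial.eval p₄ ℓ₁ = 0)
    (hp1q : ¬ projEq p₁ q) (hp2q : ¬ projEq p₂ q)
    (hp3q : ¬ projEq p₃ q) (hp4q : ¬ projEq p₄ q)
    (hp12 : ¬ projEq p₁ p₂) (hp34 : ¬ projEq p₃ p₄) :
    (⨅ k : ℕ+, (alpha (pointIdeal p₁ ^ (2 * (k : ℕ)) ⊓ pointIdeal p₂ ^ (k : ℕ) ⊓
        pointIdeal p₃ ^ (k : ℕ) ⊓ pointIdeal p₄ ^ (k : ℕ)) : ℝ) / ((k : ℕ) : ℝ))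
      = 5 / 2 := by
  exact waldschmidt_double_point_on_conic_general ℓ₁ ℓ₂ hl1 hl2 hd1 hd2 hne q hq0 hq1 hq2
    p₁ p₂ p₃ p₄ hp10 hp20 hp30 hp40 hp1L hp2L hp3L hp4L hp1q hp2q hp3q hp4q hp12 hp34
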